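/- Let γ ∈ (1,2), l > 0, c₀ > 0 be real parameters and let b* be a real number with b* < (1 − √2)·l/2 or b* > (1 + √2)·l/2. Set A* = b*(b* − l)/(2c₀) and let x* = (0, b*, −b*, 0, A*, 0, A*) be the corresponding equilibrium of the system (S). Then x* is unstable in the Lyapunov sense: there exists ε > 0 such that for every δ > 0 there exist T > 0 and a solution x = (a,b,c,d,A,B,C) of (S) on [0,T] with |x(0) − x*| < δ and |x(T) − x*| ≥ ε. -/

import Mathlib

/-- A 7-tuple of functions solves the full system (S) on the set `J`
(one-sided derivatives at boundary points of `J`). -/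
def SolvesS (γ l c₀ : ℝ) (a b c d A B C : ℝ → ℝ) (J : Set ℝ) : Prop :=
  ∀ t ∈ J,
    HasDerivWithinAt a (-(a t) ^ 2 - b t * c t + l * c t - 2 * c₀ * A t) J t ∧
    HasDerivWithinAt b (-(a t + d t) * b t + l * d t - c₀ * B t) J t ∧
    HasDerivWithinAt c (-(a t + d t) * c t - l * a t - c₀ * B t) J t ∧
    HasDerivWithinAt d (-(d t) ^ 2 - b t * c t - l * b t - 2 * c₀ * C t) J t ∧
    HasDerivWithinAt A (-2 * a t * A t - c t * B t - (γ - 1) * (a t + d t) * A t) J t ∧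
    HasDerivWithinAt B (-2 * b t * A t - 2 * c t * C t - γ * (a t + d t) * B t) J t ∧
    HasDerivWithinAt C (-2 * d t * C t - b t * B t - (γ - 1) * (a t + d t) * C t) J t

/-!
Chetaev's method at `x*`. The linearization of (S) splits into strain modes (`a - d`, `b + c`,
`A - C`, `B`), which are hyperbolic when `l² < 4 b* (b* - l)`, and oscillating modes
(`a + d`, `b - c`, `A + C`), which carry a positive definite first integral when `γ < 2`. Let `V` be
an indefinite quadratic form in the strain modes minus that first integral. For
`0 < κ`, `κ² < 4 b* (b* - l) - l²`, completing squares shows that `V̇ - κ V` is positive definite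
along the linearized flow; the nonlinear part of (S) contributes only a cubic error, so near `x*`
still `κ V ≤ V̇`. A solution starting arbitrarily close to `x*` with `V > 0` therefore has
`V` growing exponentially and must leave a fixed ball.
-/

open Set Filter Topology Metric

section Calculus

theorem exists_first_eq_of_continuousOn {u : ℝ → ℝ} {a b y : ℝ} (hab : a ≤ b)
    (hu : ContinuousOn u (Icc a b)) (ha : u a ≤ y) (hb : y ≤ u b) :
    ∃ τ ∈ Icc a b, u τ = y ∧ ∀ t ∈ Icc a τ, u t ≤ y := by
  have hcompact : IsCompact (Icc a b ∩ u ⁻¹' {y}) :=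
    isCompact_Icc.of_isClosed_subset
      (hu.preimage_isClosed_of_isClosed isClosed_Icc isClosed_singleton) inter_subset_left
  obtain ⟨τ, ⟨hτ, hτy⟩, hleast⟩ :=
    hcompact.exists_isLeast (intermediate_value_Icc hab hu ⟨ha, hb⟩)
  refine ⟨τ, hτ, hτy, fun t ht => not_lt.1 fun hyt => ?_⟩
  have htb : t ≤ b := ht.2.trans hτ.2
  obtain ⟨s, hs, hsy⟩ :=
    intermediate_value_Icc ht.1 (hu.mono (Icc_subset_Icc_right htb)) ⟨ha, hyt.le⟩
  have hτs : τ ≤ s := hleast ⟨⟨hs.1, hs.2.trans htb⟩, hsy⟩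
  have hst : s = t := hs.2.antisymm (ht.2.trans hτs)
  exact hyt.ne (hst ▸ hsy.symm)

theorem mul_exp_le_of_mul_le_deriv {u u' : ℝ → ℝ} {κ a b : ℝ} (hab : a ≤ b)
    (hu : ∀ t ∈ Icc a b, HasDerivWithinAt u (u' t) (Icc a b) t)
    (hgrowth : ∀ t ∈ Icc a b, κ * u t ≤ u' t) :
    u a * Real.exp (κ * (b - a)) ≤ u b := by
  have hneg : ∀ t ∈ Icc a b, HasDerivWithinAt (-u) (-u' t) (Icc a b) t :=
    fun t ht => (hu t ht).neg
  have hbound := le_gronwallBound_of_liminf_deriv_right_le (f := -u) (f' := -u') (δ := -u a)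
    (K := κ) (ε := 0) (fun t ht => (hneg t ht).continuousWithinAt)
    (fun t ht _ hr => ((hneg t (Ico_subset_Icc_self ht)).mono_of_mem_nhdsWithin
      (Icc_mem_nhdsGE_of_mem ht)).liminf_right_slope_le hr) le_rfl
    (fun t ht => by simpa using hgrowth t (Ico_subset_Icc_self ht)) b (right_mem_Icc.2 hab)
  simpa [gronwallBound_ε0] using hbound

variable {E F : Type*} [NormedAddCommGroup E] [NormedSpace ℝ E]
  [NormedAddCommGroup F] [NormedSpace ℝ F]

theorem exists_lipschitz_bounded_eqOn_closedBall [FiniteDimensional ℝ E] {f : E → F} {p : E}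
    {r R : ℝ} (hr : 0 < r) (hrR : r < R) (hf : ∀ x ∈ closedBall p R, ContDiffAt ℝ 1 f x) :
    ∃ g : E → F, (∃ K, LipschitzWith K g) ∧ (∃ M, ∀ x, ‖g x‖ ≤ M) ∧ EqOn g f (closedBall p r) := by
  let φ : ContDiffBump p := ⟨r, R, hr, hrR⟩
  have hsupp : tsupport (fun x => φ x • f x) ⊆ closedBall p R :=
    (tsupport_smul_subset_left φ f).trans φ.tsupport_eq.subset
  have hsmooth : ContDiff ℝ 1 fun x => φ x • f x := contDiff_iff_contDiffAt.2 fun x => by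
    by_cases hx : x ∈ tsupport fun x => φ x • f x
    · exact φ.contDiffAt.smul (hf x (hsupp hx))
    · exact contDiffAt_const.congr_of_eventuallyEq (notMem_tsupport_iff_eventuallyEq.1 hx)
  have hcompact : HasCompactSupport fun x => φ x • f x := φ.hasCompactSupport.smul_right
  refine ⟨_, hsmooth.lipschitzWith_of_hasCompactSupport hcompact one_ne_zero,
    hcompact.exists_bound_of_continuous hsmooth.continuous, fun x hx => ?_⟩
  simp only [φ.one_of_mem_closedBall hx, one_smul]

end Calculus

section IntegralCurves

variable {E : Type*} [NormedAddCommGroup E] [NormedSpace ℝ E]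

theorem exists_isIntegralCurveOn_Icc_of_lipschitzWith_of_bounded [CompleteSpace E] {g : E → E}
    {K : NNReal} {M T : ℝ} (hK : LipschitzWith K g) (hM : ∀ x, ‖g x‖ ≤ M) (hT : 0 ≤ T) (x₀ : E) :
    ∃ x : ℝ → E, x 0 = x₀ ∧ IsIntegralCurveOn x (fun _ => g) (Icc 0 T) := by
  lift M to NNReal using (norm_nonneg _).trans (hM 0)
  lift T to NNReal using hT
  have hPL : IsPicardLindelof (fun _ => g) (tmin := 0) (tmax := T) ⟨0, by simp⟩ x₀ (M * T) 0 M K :=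
    .of_time_independent (fun x _ => hM x) hK.lipschitzOnWith (by simp)
  exact hPL.exists_eq_forall_mem_Icc_hasDerivWithinAt₀

theorem exists_isIntegralCurveOn_until_sphere [FiniteDimensional ℝ E] {f : E → E} {p x₀ : E}
    {r R T : ℝ} (hrR : r < R) (hf : ∀ x ∈ closedBall p R, ContDiffAt ℝ 1 f x)
    (hx₀ : x₀ ∈ ball p r) (hT : 0 < T) :
    ∃ τ ∈ Ioc 0 T, ∃ x : ℝ → E, x 0 = x₀ ∧ IsIntegralCurveOn x (fun _ => f) (Icc 0 τ) ∧
      (∀ t ∈ Icc 0 τ, x t ∈ closedBall p r) ∧ (τ = T ∨ x τ ∈ sphere p r) := by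
  obtain ⟨g, ⟨K, hK⟩, ⟨M, hM⟩, hgf⟩ :=
    exists_lipschitz_bounded_eqOn_closedBall (pos_of_mem_ball hx₀) hrR hf
  obtain ⟨x, hx0, hx⟩ := exists_isIntegralCurveOn_Icc_of_lipschitzWith_of_bounded hK hM hT.le x₀
  have hrestrict : ∀ τ ≤ T, (∀ t ∈ Icc 0 τ, x t ∈ closedBall p r) →
      IsIntegralCurveOn x (fun _ => f) (Icc 0 τ) := fun τ hτ hball t ht => by
    simpa only [hgf (hball t ht)] using hx.mono (Icc_subset_Icc_right hτ) t ht
  by_cases hexit : ∃ t ∈ Icc 0 T, r ≤ dist (x t) p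
  · obtain ⟨t₁, ht₁, hrt₁⟩ := hexit
    have hdist : ContinuousOn (fun t => dist (x t) p) (Icc 0 t₁) := fun t ht =>
      ((hx t ⟨ht.1, ht.2.trans ht₁.2⟩).continuousWithinAt.mono
        (Icc_subset_Icc_right ht₁.2)).dist continuousWithinAt_const
    have hstart : dist (x 0) p < r := hx0 ▸ hx₀
    obtain ⟨τ, hτ, hτr, hball⟩ := exists_first_eq_of_continuousOn ht₁.1 hdist hstart.le hrt₁
    have hτ0 : τ ≠ 0 := by rintro rfl; exact hstart.ne hτr
    have hτT : τ ≤ T := hτ.2.trans ht₁.2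
    exact ⟨τ, ⟨hτ.1.lt_of_ne' hτ0, hτT⟩, x, hx0, hrestrict τ hτT hball, hball, .inr hτr⟩
  · push Not at hexit
    have hball : ∀ t ∈ Icc 0 T, x t ∈ closedBall p r := fun t ht => (hexit t ht).le
    exact ⟨T, ⟨hT, le_rfl⟩, x, hx0, hrestrict T le_rfl hball, hball, .inl rfl⟩

theorem mul_exp_le_of_isIntegralCurveOn {f : E → E} {V : E → ℝ} {x : ℝ → E} {κ a b : ℝ}
    (hab : a ≤ b) (hx : IsIntegralCurveOn x (fun _ => f) (Icc a b))
    (hV : ∀ t ∈ Icc a b, DifferentiableAt ℝ V (x t))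
    (hgrowth : ∀ t ∈ Icc a b, κ * V (x t) ≤ fderiv ℝ V (x t) (f (x t))) :
    V (x a) * Real.exp (κ * (b - a)) ≤ V (x b) :=
  mul_exp_le_of_mul_le_deriv hab
    (fun t ht => (hV t ht).hasFDerivAt.comp_hasDerivWithinAt t (hx t ht)) hgrowth

end IntegralCurves

section QuadraticForm

variable {E : Type*} [NormedAddCommGroup E] [NormedSpace ℝ E]

theorem frequently_quadraticForm_sub_pos {Q : QuadraticForm ℝ E} {v : E} (hv : 0 < Q v) (p : E) :
    ∃ᶠ x in 𝓝 p, 0 < Q (x - p) := by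
  have hline : Tendsto (fun s : ℝ => p + s • v) (𝓝[≠] 0) (𝓝 p) :=
    tendsto_nhdsWithin_of_tendsto_nhds (Continuous.tendsto' (by fun_prop) _ _ (by simp))
  refine hline.frequently (Eventually.frequently ?_)
  filter_upwards [self_mem_nhdsWithin] with s hs
  rw [add_sub_cancel_left, QuadraticMap.map_smul]
  exact mul_pos (mul_self_pos.2 hs) hv

variable [FiniteDimensional ℝ E]

theorem differentiable_quadraticForm (Q : QuadraticForm ℝ E) : Differentiable ℝ Q := by
  let B := (QuadraticMap.associated (R := ℝ) Q).toContinuousBilinearMap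
  have hB : ⇑Q = fun v => B v v := funext fun v =>
    (QuadraticMap.associated_eq_self_apply ℝ Q v).symm
  rw [hB]
  fun_prop

theorem fderiv_quadraticForm (Q : QuadraticForm ℝ E) (v w : E) :
    fderiv ℝ Q v w = QuadraticMap.polar Q v w := by
  rw [← (differentiable_quadraticForm Q v).lineDeriv_eq_fderiv, QuadraticMap.lineDeriv]

theorem exists_forall_mul_norm_sq_le_of_posDef {Q : QuadraticForm ℝ E} (hQ : Q.PosDef) :
    ∃ c > 0, ∀ v, c * ‖v‖ ^ 2 ≤ Q v := by
  obtain ⟨c, hc, hcQ⟩ : ∃ c > 0, ∀ u ∈ sphere (0 : E) 1, c ≤ Q u :=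
    (isCompact_sphere 0 1).exists_forall_le'
      (differentiable_quadraticForm Q).continuous.continuousOn
      fun u hu => hQ u (ne_zero_of_mem_unit_sphere ⟨u, hu⟩)
  refine ⟨c, hc, fun v => ?_⟩
  rcases eq_or_ne v 0 with rfl | hv
  · simp
  · have hunit : ‖v‖⁻¹ • v ∈ sphere (0 : E) 1 := by simp [norm_smul, hv]
    calc c * ‖v‖ ^ 2 ≤ Q (‖v‖⁻¹ • v) * ‖v‖ ^ 2 := by gcongr; exact hcQ _ hunit
      _ = Q v := by
        rw [QuadraticMap.map_smul, smul_eq_mul]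
        field_simp [norm_ne_zero_iff.2 hv]

end QuadraticForm

section Instability

variable {E : Type*} [NormedAddCommGroup E] [NormedSpace ℝ E]

/-- Instability in the sense of Lyapunov of the rest point `p` of the autonomous equation
`x' = f x`. Solutions on a compact interval suffice, so no global existence is presupposed. -/
def LyapunovUnstable (f : E → E) (p : E) : Prop :=
  ∃ ε > 0, ∀ δ > 0, ∃ T > 0, ∃ x : ℝ → E,
    IsIntegralCurveOn x (fun _ => f) (Icc 0 T) ∧ ‖x 0 - p‖ < δ ∧ ε ≤ ‖x T - p‖

variable [FiniteDimensional ℝ E] {f : E → E} {p : E} {κ : ℝ}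

theorem lyapunovUnstable_of_mul_le_fderiv {V : E → ℝ} (hf : ContDiffAt ℝ 1 f p)
    (hV : ∀ᶠ x in 𝓝 p, DifferentiableAt ℝ V x) (hκ : 0 < κ)
    (hgrowth : ∀ᶠ x in 𝓝 p, κ * V x ≤ fderiv ℝ V x (f x)) (hpos : ∃ᶠ x in 𝓝 p, 0 < V x) :
    LyapunovUnstable f p := by
  obtain ⟨R, hR, hball⟩ := nhds_basis_closedBall.eventually_iff.1
    ((hf.eventually (by simp)).and (hV.and hgrowth))
  have hsmall : closedBall p (R / 2) ⊆ closedBall p R := closedBall_subset_closedBall (by linarith)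
  obtain ⟨M, hM⟩ := (isCompact_closedBall p (R / 2)).exists_bound_of_continuousOn fun x hx =>
    (hball (hsmall hx)).2.1.continuousAt.continuousWithinAt
  refine ⟨R / 2, half_pos hR, fun δ hδ => ?_⟩
  obtain ⟨x₀, hVx₀, hx₀⟩ := (hpos.and_eventually
    (ball_mem_nhds p (lt_min hδ (half_pos hR)))).exists
  obtain ⟨T, hT, hMT⟩ : ∃ T > 0, M < V x₀ * Real.exp (κ * T) := by
    have htop : Tendsto (fun T => V x₀ * Real.exp (κ * T)) atTop atTop :=
      (Real.tendsto_exp_atTop.comp (tendsto_id.const_mul_atTop hκ)).const_mul_atTop hVx₀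
    exact ((eventually_gt_atTop 0).and (htop.eventually_gt_atTop M)).exists
  obtain ⟨τ, hτ, x, hx0, hx, hxball, hend⟩ := exists_isIntegralCurveOn_until_sphere
    (half_lt_self hR) (fun x hx => (hball hx).1) (ball_subset_ball (min_le_right _ _) hx₀) hT
  have hexp : V x₀ * Real.exp (κ * τ) ≤ V (x τ) := by
    simpa only [sub_zero, hx0] using mul_exp_le_of_isIntegralCurveOn hτ.1.le hx
      (fun t ht => (hball (hsmall (hxball t ht))).2.1)
      (fun t ht => (hball (hsmall (hxball t ht))).2.2)
  have hVM : V (x τ) ≤ M := (le_abs_self _).trans (hM _ (hxball τ (right_mem_Icc.2 hτ.1.le)))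
  have hτT : τ ≠ T := by rintro rfl; exact (hMT.trans_le hexp).not_ge hVM
  refine ⟨τ, hτ.1, x, hx, ?_, ?_⟩
  · exact hx0 ▸ mem_ball_iff_norm.1 (ball_subset_ball (min_le_left _ _) hx₀)
  · exact (mem_sphere_iff_norm.1 (hend.resolve_left hτT)).ge

theorem eventually_mul_le_polar {Q : QuadraticForm ℝ E} (hf : DifferentiableAt ℝ f p)
    (hp : f p = 0)
    (hgrowth : ∀ v ≠ 0, κ * Q v < QuadraticMap.polar Q v (fderiv ℝ f p v)) :
    ∀ᶠ x in 𝓝 p, κ * Q (x - p) ≤ QuadraticMap.polar Q (x - p) (f x) := by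
  let L := fderiv ℝ f p
  let B := Q.polarBilin.toContinuousBilinearMap
  let growth : QuadraticForm ℝ E :=
    LinearMap.BilinMap.toQuadraticMap (Q.polarBilin.compl₂ L.toLinearMap) - κ • Q
  have hgrowth_pos : growth.PosDef := fun v hv => by simpa [growth] using hgrowth v hv
  obtain ⟨c, hc, hcQ⟩ := exists_forall_mul_norm_sq_le_of_posDef hgrowth_pos
  filter_upwards [hf.hasFDerivAt.isLittleO.def (c := c / (‖B‖ + 1)) (by positivity)] with x hx
  set v := x - p
  set w := f x - f p - L v
  have hsplit : QuadraticMap.polar Q v (f x) = QuadraticMap.polar Q v (L v) + B v w := by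
    have hfx : f x = L v + w := by simp [w, hp]
    rw [hfx, QuadraticMap.polar_add_right]
    rfl
  have hremainder : |B v w| ≤ c * ‖v‖ ^ 2 :=
    calc |B v w| ≤ ‖B‖ * ‖v‖ * ‖w‖ := B.le_opNorm₂ v w
      _ ≤ (‖B‖ + 1) * ‖v‖ * (c / (‖B‖ + 1) * ‖v‖) := by gcongr; linarith
      _ = c * ‖v‖ ^ 2 := by field_simp
  have hmain : c * ‖v‖ ^ 2 ≤ QuadraticMap.polar Q v (L v) - κ * Q v := by
    simpa [growth] using hcQ v
  linarith [(abs_le.1 hremainder).1]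

theorem lyapunovUnstable_of_quadraticForm {Q : QuadraticForm ℝ E} (hf : ContDiffAt ℝ 1 f p)
    (hp : f p = 0) (hκ : 0 < κ)
    (hgrowth : ∀ v ≠ 0, κ * Q v < QuadraticMap.polar Q v (fderiv ℝ f p v)) (hpos : ∃ v, 0 < Q v) :
    LyapunovUnstable f p := by
  obtain ⟨v, hv⟩ := hpos
  have hfderiv : ∀ x w, fderiv ℝ (fun x => Q (x - p)) x w = QuadraticMap.polar Q (x - p) w := by
    intro x w
    rw [fderiv_comp_sub, fderiv_quadraticForm]
  refine lyapunovUnstable_of_mul_le_fderiv (V := fun x => Q (x - p)) hf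
    (.of_forall fun x => ?_) hκ ?_ (frequently_quadraticForm_sub_pos hv p)
  · exact (differentiable_quadraticForm Q).comp (differentiable_id.sub_const p) x
  · simpa only [hfderiv] using eventually_mul_le_polar (hf.differentiableAt one_ne_zero) hp hgrowth

end Instability

section Vortex

/-- The phase space `ℝ⁷` of (S), with coordinates `0, …, 6` standing for `a, b, c, d, A, B, C`. -/
abbrev EulerState := EuclideanSpace ℝ (Fin 7)

/-- The right-hand side of (S) as a vector field on the phase space. -/
noncomputable def eulerField (γ l c₀ : ℝ) (x : EulerState) : EulerState :=
  !₂[-(x 0) ^ 2 - x 1 * x 2 + l * x 2 - 2 * c₀ * x 4,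
    -(x 0 + x 3) * x 1 + l * x 3 - c₀ * x 5,
    -(x 0 + x 3) * x 2 - l * x 0 - c₀ * x 5,
    -(x 3) ^ 2 - x 1 * x 2 - l * x 1 - 2 * c₀ * x 6,
    -2 * x 0 * x 4 - x 2 * x 5 - (γ - 1) * (x 0 + x 3) * x 4,
    -2 * x 1 * x 4 - 2 * x 2 * x 6 - γ * (x 0 + x 3) * x 5,
    -2 * x 3 * x 6 - x 1 * x 5 - (γ - 1) * (x 0 + x 3) * x 6]

/-- The rest point `x*` of (S): the steady circular vortex of half-vorticity `b`. -/
noncomputable def circularVortex (l c₀ b : ℝ) : EulerState :=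
  !₂[0, b, -b, 0, b * (b - l) / (2 * c₀), 0, b * (b - l) / (2 * c₀)]

/-- The derivative of `eulerField` at `circularVortex`; see `fderiv_eulerField_circularVortex`. -/
noncomputable def vortexLinearization (γ l c₀ b : ℝ) (v : EulerState) : EulerState :=
  !₂[b * v 1 + (l - b) * v 2 - 2 * c₀ * v 4,
    -b * v 0 + (l - b) * v 3 - c₀ * v 5,
    (b - l) * v 0 + b * v 3 - c₀ * v 5,
    (b - l) * v 1 - b * v 2 - 2 * c₀ * v 6,
    b * v 5 - b * (b - l) / (2 * c₀) * (2 * v 0 + (γ - 1) * (v 0 + v 3)),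
    2 * b * (v 6 - v 4) - b * (b - l) / c₀ * (v 1 + v 2),
    -b * v 5 - b * (b - l) / (2 * c₀) * (2 * v 3 + (γ - 1) * (v 0 + v 3))]

/-- The quadratic form used as a Chetaev function at `circularVortex`. Its first part is indefinite
and lives on the strain modes `a - d`, `b + c`, `A - C`, `B`; the subtracted sum of squares is a
first integral of the linearized flow on the remaining, oscillating modes `a + d`, `b - c`,
`A + C`. -/
noncomputable def vortexChetaevForm (γ l c₀ b : ℝ) : QuadraticForm ℝ EulerState :=
  let x (i : Fin 7) : EulerState →ₗ[ℝ] ℝ := EuclideanSpace.projₗ i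
  c₀ • (QuadraticMap.linMulLin (x 3 - x 0) (x 4 - x 6) - QuadraticMap.linMulLin (x 1 + x 2) (x 5))
    - ((2 * b - l) ^ 2 - 2 * γ * (b * (b - l))) • QuadraticMap.sq.comp (x 0 + x 3)
    - QuadraticMap.sq.comp ((2 * b - l) • (x 1 - x 2) - (2 * c₀) • (x 4 + x 6))
    - QuadraticMap.sq.comp (((2 * b - l) * c₀) • (x 4 + x 6) - (γ * (b * (b - l))) • (x 1 - x 2))

variable {γ l c₀ b : ℝ}

theorem contDiff_eulerField {n : WithTop ℕ∞} : ContDiff ℝ n (eulerField γ l c₀) := by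
  refine contDiff_euclidean.2 fun i => ?_
  unfold eulerField
  fin_cases i <;> simp only [Fin.reduceFinMk, Fin.zero_eta, Fin.mk_one, Matrix.cons_val] <;>
    fun_prop

theorem solvesS_of_isIntegralCurveOn {x : ℝ → EulerState} {J : Set ℝ}
    (hx : IsIntegralCurveOn x (fun _ => eulerField γ l c₀) J) :
    SolvesS γ l c₀ (x · 0) (x · 1) (x · 2) (x · 3) (x · 4) (x · 5) (x · 6) J := fun t ht =>
  have hcoord (i : Fin 7) :
      HasDerivWithinAt (fun s => x s i) (eulerField γ l c₀ (x t) i) J t :=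
    (EuclideanSpace.proj (𝕜 := ℝ) i).hasFDerivAt.comp_hasDerivWithinAt t (hx t ht)
  ⟨hcoord 0, hcoord 1, hcoord 2, hcoord 3, hcoord 4, hcoord 5, hcoord 6⟩

theorem norm_sub_circularVortex (y : EulerState) :
    ‖y - circularVortex l c₀ b‖ = √((y 0 - 0) ^ 2 + (y 1 - b) ^ 2 + (y 2 - (-b)) ^ 2 +
      (y 3 - 0) ^ 2 + (y 4 - b * (b - l) / (2 * c₀)) ^ 2 + (y 5 - 0) ^ 2 +
      (y 6 - b * (b - l) / (2 * c₀)) ^ 2) := by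
  simp [EuclideanSpace.norm_eq, Fin.sum_univ_seven, circularVortex]

-- The quadratic part of (S) is (S) without the Coriolis and pressure terms, i.e. `l = c₀ = 0`.
theorem eulerField_circularVortex_add (hc₀ : c₀ ≠ 0) (v : EulerState) :
    eulerField γ l c₀ (circularVortex l c₀ b + v) =
      vortexLinearization γ l c₀ b v + eulerField γ 0 0 v := by
  ext i
  fin_cases i <;> simp [eulerField, circularVortex, vortexLinearization] <;> field_simp <;> ring

theorem eulerField_zero_zero_smul (s : ℝ) (v : EulerState) :
    eulerField γ 0 0 (s • v) = s ^ 2 • eulerField γ 0 0 v := by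
  ext i
  fin_cases i <;> simp [eulerField] <;> ring

theorem vortexLinearization_smul (s : ℝ) (v : EulerState) :
    vortexLinearization γ l c₀ b (s • v) = s • vortexLinearization γ l c₀ b v := by
  ext i
  fin_cases i <;> simp [vortexLinearization] <;> ring

theorem eulerField_circularVortex (hc₀ : c₀ ≠ 0) :
    eulerField γ l c₀ (circularVortex l c₀ b) = 0 := by
  ext i
  fin_cases i <;> simp [eulerField, circularVortex] <;> field_simp <;> ring

theorem fderiv_eulerField_circularVortex (hc₀ : c₀ ≠ 0) (v : EulerState) :
    fderiv ℝ (eulerField γ l c₀) (circularVortex l c₀ b) v = vortexLinearization γ l c₀ b v := by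
  have hdiff : Differentiable ℝ (eulerField γ l c₀) :=
    contDiff_eulerField.differentiable one_ne_zero
  refine ((hdiff _).hasFDerivAt.hasLineDerivAt v).unique ?_
  simp only [HasLineDerivAt, eulerField_circularVortex_add hc₀, vortexLinearization_smul,
    eulerField_zero_zero_smul]
  have hid := hasDerivAt_id (0 : ℝ)
  simpa using! (hid.smul_const (vortexLinearization γ l c₀ b v)).add
    ((hid.pow 2).smul_const (eulerField γ 0 0 v))

theorem vortexChetaevForm_apply (v : EulerState) :
    vortexChetaevForm γ l c₀ b v =
      c₀ * ((v 3 - v 0) * (v 4 - v 6) - (v 1 + v 2) * v 5)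
      - ((2 * b - l) ^ 2 - 2 * γ * (b * (b - l))) * (v 0 + v 3) ^ 2
      - ((2 * b - l) * (v 1 - v 2) - 2 * c₀ * (v 4 + v 6)) ^ 2
      - ((2 * b - l) * c₀ * (v 4 + v 6) - γ * (b * (b - l)) * (v 1 - v 2)) ^ 2 := by
  simp only [vortexChetaevForm, QuadraticMap.add_linMulLin, smul_add, sub_apply, smul_apply,
    QuadraticMap.linMulLin_apply, LinearMap.sub_apply, PiLp.projₗ_apply, add_apply, smul_eq_mul,
    QuadraticMap.comp_apply, LinearMap.add_apply, QuadraticMap.sq_apply, LinearMap.smul_apply]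
  ring

theorem vortexChetaevForm_growth_eq (hc₀ : c₀ ≠ 0) (κ : ℝ) (v : EulerState) :
    8 * (QuadraticMap.polar (vortexChetaevForm γ l c₀ b) v (vortexLinearization γ l c₀ b v) -
        κ * vortexChetaevForm γ l c₀ b v) =
      (4 * c₀ * (v 4 - v 6) + (2 * b - l) * (v 1 + v 2) + κ * (v 0 - v 3)) ^ 2
      + (4 * c₀ * v 5 - (2 * b - l) * (v 0 - v 3) + κ * (v 1 + v 2)) ^ 2
      + (4 * (b * (b - l)) - l ^ 2 - κ ^ 2) * ((v 0 - v 3) ^ 2 + (v 1 + v 2) ^ 2)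
      + 8 * κ * (((2 * b - l) ^ 2 - 2 * γ * (b * (b - l))) * (v 0 + v 3) ^ 2
        + ((2 * b - l) * (v 1 - v 2) - 2 * c₀ * (v 4 + v 6)) ^ 2
        + ((2 * b - l) * c₀ * (v 4 + v 6) - γ * (b * (b - l)) * (v 1 - v 2)) ^ 2) := by
  simp only [QuadraticMap.polar, vortexLinearization, vortexChetaevForm_apply, PiLp.add_apply,
    Matrix.cons_val]
  field_simp
  ring

theorem eq_zero_of_modes_eq_zero {v : EulerState} (hc₀ : c₀ ≠ 0)
    (hosc : (2 * b - l) ^ 2 - 2 * γ * (b * (b - l)) ≠ 0)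
    (h03 : v 0 - v 3 = 0) (h03' : v 0 + v 3 = 0) (h12 : v 1 + v 2 = 0)
    (h46 : v 4 - v 6 = 0) (h5 : v 5 = 0)
    (hfirst : (2 * b - l) * (v 1 - v 2) - 2 * c₀ * (v 4 + v 6) = 0)
    (hsecond : (2 * b - l) * c₀ * (v 4 + v 6) - γ * (b * (b - l)) * (v 1 - v 2) = 0) :
    v = 0 := by
  -- `hosc` says that the linear system `hfirst`, `hsecond` in `v 1 - v 2` and `c₀ * (v 4 + v 6)`
  -- has nonzero determinant.
  have h12' : v 1 - v 2 = 0 := by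
    apply mul_left_cancel₀ hosc
    linear_combination (2 * b - l) * hfirst + 2 * hsecond
  have h46' : v 4 + v 6 = 0 := by
    apply mul_left_cancel₀ (mul_ne_zero two_ne_zero hc₀)
    linear_combination (2 * b - l) * h12' - hfirst
  ext i
  fin_cases i <;> simp only [Fin.reduceFinMk, Fin.zero_eta, Fin.mk_one, PiLp.zero_apply] <;>
    linarith

theorem mul_vortexChetaevForm_lt_polar {κ : ℝ} (hc₀ : c₀ ≠ 0) (hκ : 0 < κ)
    (hstrain : κ ^ 2 < 4 * (b * (b - l)) - l ^ 2)
    (hosc : 2 * γ * (b * (b - l)) < (2 * b - l) ^ 2) {v : EulerState} (hv : v ≠ 0) :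
    κ * vortexChetaevForm γ l c₀ b v <
      QuadraticMap.polar (vortexChetaevForm γ l c₀ b) v (vortexLinearization γ l c₀ b v) := by
  contrapose! hv with hle
  have hμ : 0 < 4 * (b * (b - l)) - l ^ 2 - κ ^ 2 := sub_pos.2 hstrain
  have hω : 0 < (2 * b - l) ^ 2 - 2 * γ * (b * (b - l)) := sub_pos.2 hosc
  have hsum := mul_nonpos_of_nonneg_of_nonpos (by norm_num : (0 : ℝ) ≤ 8) (sub_nonpos.2 hle)
  rw [vortexChetaevForm_growth_eq hc₀] at hsum
  have hzero := hsum.antisymm (by positivity)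
  simp (disch := positivity) only [add_eq_zero_iff_of_nonneg, mul_eq_zero_iff_left hμ.ne',
    mul_eq_zero_iff_left hω.ne', mul_eq_zero_iff_left (mul_pos (by norm_num : (0 : ℝ) < 8) hκ).ne',
    sq_eq_zero_iff] at hzero
  obtain ⟨⟨⟨hX, hY⟩, h03, h12⟩, ⟨h03', hfirst⟩, hsecond⟩ := hzero
  have h46 : v 4 - v 6 = 0 := by simpa [h03, h12, hc₀] using hX
  have h5 : v 5 = 0 := by simpa [h03, h12, hc₀] using hY
  exact eq_zero_of_modes_eq_zero hc₀ hω.ne' h03 h03' h12 h46 h5 hfirst hsecond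

theorem lyapunovUnstable_circularVortex (hc₀ : c₀ ≠ 0) (hstrain : l ^ 2 < 4 * (b * (b - l)))
    (hosc : 2 * γ * (b * (b - l)) < (2 * b - l) ^ 2) :
    LyapunovUnstable (eulerField γ l c₀) (circularVortex l c₀ b) := by
  obtain ⟨κ, hκ, hκ_sq⟩ : ∃ κ > 0, κ ^ 2 < 4 * (b * (b - l)) - l ^ 2 :=
    (exists_between (Real.sqrt_pos.2 (sub_pos.2 hstrain))).imp fun κ hκ =>
      ⟨hκ.1, (Real.lt_sqrt hκ.1.le).1 hκ.2⟩
  refine lyapunovUnstable_of_quadraticForm (Q := vortexChetaevForm γ l c₀ b)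
    contDiff_eulerField.contDiffAt (eulerField_circularVortex hc₀) hκ (fun v hv => ?_)
    ⟨!₂[1, 0, 0, -1, -c₀, 0, c₀], ?_⟩
  · rw [fderiv_eulerField_circularVortex hc₀]
    exact mul_vortexChetaevForm_lt_polar hc₀ hκ hκ_sq hosc hv
  · have hvalue : vortexChetaevForm γ l c₀ b !₂[1, 0, 0, -1, -c₀, 0, c₀] = 4 * c₀ ^ 2 := by
      simp only [vortexChetaevForm_apply, Matrix.cons_val]
      ring
    rw [hvalue]
    positivity

theorem sq_lt_four_mul_of_lt_or_gt_sqrt_two (hl : 0 < l)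
    (hb : b < (1 - √2) * l / 2 ∨ (1 + √2) * l / 2 < b) : l ^ 2 < 4 * (b * (b - l)) := by
  have habs : √2 * l < |2 * b - l| :=
    lt_abs.2 (hb.symm.imp (fun h => by linarith) (fun h => by linarith))
  have hsq : 2 * l ^ 2 < (2 * b - l) ^ 2 :=
    calc 2 * l ^ 2 = (√2 * l) ^ 2 := by rw [mul_pow, Real.sq_sqrt zero_le_two]
      _ < |2 * b - l| ^ 2 := by gcongr
      _ = (2 * b - l) ^ 2 := sq_abs _
  linarith

theorem two_mul_mul_lt_sq_of_lt_two (hγ : γ < 2) (hstrain : l ^ 2 < 4 * (b * (b - l))) :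
    2 * γ * (b * (b - l)) < (2 * b - l) ^ 2 := by
  have hβ : 0 < b * (b - l) := by linarith [sq_nonneg l]
  calc 2 * γ * (b * (b - l)) < 2 * 2 * (b * (b - l)) := by gcongr
    _ ≤ (2 * b - l) ^ 2 := by linarith [sq_nonneg l]

end Vortex

theorem stmt_14_general (γ l c₀ bs : ℝ) (hc₀ : c₀ ≠ 0) (hstrain : l ^ 2 < 4 * (bs * (bs - l)))
    (hosc : 2 * γ * (bs * (bs - l)) < (2 * bs - l) ^ 2) :
    ∃ ε > 0, ∀ δ > 0, ∃ T > 0, ∃ a b c d A B C : ℝ → ℝ,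
      SolvesS γ l c₀ a b c d A B C (Set.Icc 0 T) ∧
      Real.sqrt ((a 0 - 0) ^ 2 + (b 0 - bs) ^ 2 + (c 0 - (-bs)) ^ 2 + (d 0 - 0) ^ 2 +
        (A 0 - bs * (bs - l) / (2 * c₀)) ^ 2 + (B 0 - 0) ^ 2 +
        (C 0 - bs * (bs - l) / (2 * c₀)) ^ 2) < δ ∧
      Real.sqrt ((a T - 0) ^ 2 + (b T - bs) ^ 2 + (c T - (-bs)) ^ 2 + (d T - 0) ^ 2 +
        (A T - bs * (bs - l) / (2 * c₀)) ^ 2 + (B T - 0) ^ 2 +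
        (C T - bs * (bs - l) / (2 * c₀)) ^ 2) ≥ ε := by
  obtain ⟨ε, hε, hescape⟩ := lyapunovUnstable_circularVortex hc₀ hstrain hosc
  refine ⟨ε, hε, fun δ hδ => ?_⟩
  obtain ⟨T, hT, x, hx, hstart, hend⟩ := hescape δ hδ
  rw [norm_sub_circularVortex] at hstart hend
  exact ⟨T, hT, _, _, _, _, _, _, _, solvesS_of_isIntegralCurveOn hx, hstart, hend⟩

/-- For `γ ∈ (1,2)`, `l > 0`, `c₀ > 0` and `b* < (1−√2)l/2` or
`b* > (1+√2)l/2`, the equilibrium `x* = (0, b*, −b*, 0, A*, 0, A*)` of (S), with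
`A* = b*(b*−l)/(2c₀)`, is Lyapunov unstable: there is `ε > 0` such that for every
`δ > 0` some solution on `[0,T]` starts within Euclidean distance `δ` of `x*` but
ends at distance `≥ ε` from it. -/
theorem stmt_14 (γ l c₀ bs : ℝ) (hγ1 : 1 < γ) (hγ2 : γ < 2) (hl : 0 < l)
    (hc₀ : 0 < c₀)
    (hbs : bs < (1 - Real.sqrt 2) * l / 2 ∨ (1 + Real.sqrt 2) * l / 2 < bs) :
    ∃ ε > 0, ∀ δ > 0, ∃ T > 0, ∃ a b c d A B C : ℝ → ℝ,
      SolvesS γ l c₀ a b c d A B C (Set.Icc 0 T) ∧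
      Real.sqrt ((a 0 - 0) ^ 2 + (b 0 - bs) ^ 2 + (c 0 - (-bs)) ^ 2 + (d 0 - 0) ^ 2 +
        (A 0 - bs * (bs - l) / (2 * c₀)) ^ 2 + (B 0 - 0) ^ 2 +
        (C 0 - bs * (bs - l) / (2 * c₀)) ^ 2) < δ ∧
      Real.sqrt ((a T - 0) ^ 2 + (b T - bs) ^ 2 + (c T - (-bs)) ^ 2 + (d T - 0) ^ 2 +
        (A T - bs * (bs - l) / (2 * c₀)) ^ 2 + (B T - 0) ^ 2 +
        (C T - bs * (bs - l) / (2 * c₀)) ^ 2) ≥ ε :=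
  have hstrain := sq_lt_four_mul_of_lt_or_gt_sqrt_two hl hbs
  stmt_14_general γ l c₀ bs hc₀.ne' hstrain (two_mul_mul_lt_sq_of_lt_two hγ2 hstrain)
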